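/- arXiv:1612.05594 — 3 statements merged into one kernel-verified Lean document; each statement's English description precedes it below -/
import Mathlib

section
/- Let f : ℝⁿ → ℝⁿ be continuously differentiable, let M be a symmetric positive definite real n×n matrix, and let β > 0. Assume that for every z ∈ ℝⁿ the Loewner inequality (Df(z))ᵀ M + M (Df(z)) ≼ −2βM holds, where Df(z) is the Jacobian (Fréchet derivative) of f at z. If x, y : [0,∞) → ℝⁿ are differentiable and satisfy x′(t) = f(x(t)) and y′(t) = f(y(t)) for all t ≥ 0, then for all t ≥ 0, ‖x(t) − y(t)‖_M ≤ e^{−βt} ‖x(0) − y(0)‖_M. In particular every trajectory converges globally exponentially to the given trajectory. -/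
open Matrix

/-- The M-norm of a vector: `‖v‖_M = √(vᵀ M v)`. -/
noncomputable def mnorm {n : ℕ} (M : Matrix (Fin n) (Fin n) ℝ) (v : Fin n → ℝ) : ℝ :=
  Real.sqrt (v ⬝ᵥ M.mulVec v)

/-- The Jacobian of `f` at `z`, as a matrix. -/
noncomputable def jac {n : ℕ} (f : (Fin n → ℝ) → (Fin n → ℝ)) (z : Fin n → ℝ) :
    Matrix (Fin n) (Fin n) ℝ :=
  LinearMap.toMatrix' (fderiv ℝ f z : (Fin n → ℝ) →ₗ[ℝ] (Fin n → ℝ))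

/-- Loewner order: `A ≼ B` iff `B - A` is positive semidefinite. -/
def loewnerLE {n : ℕ} (A B : Matrix (Fin n) (Fin n) ℝ) : Prop := (B - A).PosSemidef

theorem hasDerivAt_dotP {n : ℕ} {u v : ℝ → Fin n → ℝ} {u' v' : Fin n → ℝ} {t : ℝ}
    (hu : HasDerivAt u u' t) (hv : HasDerivAt v v' t) :
    HasDerivAt (fun s => u s ⬝ᵥ v s) (u' ⬝ᵥ v t + u t ⬝ᵥ v') t := by
  have h := HasDerivAt.fun_sum (u := Finset.univ) (fun i _ =>
    ((hasDerivAt_pi.1 hu i).mul (hasDerivAt_pi.1 hv i)))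
  simpa [dotProduct, Finset.sum_add_distrib] using h

theorem hasDerivAt_mulV {n : ℕ} (M : Matrix (Fin n) (Fin n) ℝ) {v : ℝ → Fin n → ℝ}
    {v' : Fin n → ℝ} {t : ℝ} (hv : HasDerivAt v v' t) :
    HasDerivAt (fun s => M.mulVec (v s)) (M.mulVec v') t :=
  (M.mulVecLin.toContinuousLinearMap).hasFDerivAt.comp_hasDerivAt t hv

theorem symm_dot {n : ℕ} {M : Matrix (Fin n) (Fin n) ℝ} (hM : M.IsSymm) (u v : Fin n → ℝ) :
    u ⬝ᵥ M.mulVec v = v ⬝ᵥ M.mulVec u := by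
  rw [dotProduct_mulVec, ← mulVec_transpose, hM.eq, dotProduct_comm]

theorem jac_ineq {n : ℕ} {f : (Fin n → ℝ) → (Fin n → ℝ)}
    {M : Matrix (Fin n) (Fin n) ℝ} (hM : M.IsSymm) {β : ℝ} {z : Fin n → ℝ}
    (h : loewnerLE ((jac f z)ᵀ * M + M * jac f z) ((-(2 * β)) • M)) (w : Fin n → ℝ) :
    w ⬝ᵥ M.mulVec (fderiv ℝ f z w) ≤ -β * (w ⬝ᵥ M.mulVec w) := by
  have h1 := h.dotProduct_mulVec_nonneg w
  have hj : (jac f z).mulVec w = fderiv ℝ f z w := by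
    simp [jac, LinearMap.toMatrix'_mulVec]
  have h2 : w ⬝ᵥ ((jac f z)ᵀ * M).mulVec w = w ⬝ᵥ M.mulVec (fderiv ℝ f z w) := by
    rw [← mulVec_mulVec, dotProduct_mulVec, vecMul_transpose, hj, symm_dot hM]
  have h3 : w ⬝ᵥ (M * jac f z).mulVec w = w ⬝ᵥ M.mulVec (fderiv ℝ f z w) := by
    rw [← mulVec_mulVec, hj]
  rw [star_trivial, sub_mulVec, add_mulVec, smul_mulVec, dotProduct_sub, dotProduct_add,
    h2, h3, dotProduct_smul, smul_eq_mul] at h1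
  linarith

theorem one_sided {n : ℕ} {f : (Fin n → ℝ) → (Fin n → ℝ)} (hf : ContDiff ℝ 1 f)
    {M : Matrix (Fin n) (Fin n) ℝ} (hM : M.IsSymm) {β : ℝ}
    (h : ∀ z, loewnerLE ((jac f z)ᵀ * M + M * jac f z) ((-(2 * β)) • M)) (a b : Fin n → ℝ) :
    (a - b) ⬝ᵥ M.mulVec (f a - f b) ≤ -β * ((a - b) ⬝ᵥ M.mulVec (a - b)) := by
  set w := a - b with hw
  have hd : ∀ s : ℝ, HasDerivAt (fun s : ℝ => w ⬝ᵥ M.mulVec (f (b + s • w)))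
      (w ⬝ᵥ M.mulVec (fderiv ℝ f (b + s • w) w)) s := by
    intro s
    have hl : HasDerivAt (fun s : ℝ => b + s • w) w s := by
      simpa using ((hasDerivAt_id s).smul_const w).const_add b
    have hc := ((hf.differentiable one_ne_zero) (b + s • w)).hasFDerivAt.comp_hasDerivAt s hl
    simpa using hasDerivAt_dotP (hasDerivAt_const s w) (hasDerivAt_mulV M hc)
  obtain ⟨c, -, hc⟩ := exists_hasDerivAt_eq_slope _ _ (zero_lt_one (α := ℝ))
    (fun s _ => (hd s).continuousAt.continuousWithinAt) (fun s _ => hd s)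
  have hj := jac_ineq hM (h (b + c • w)) w
  rw [hc] at hj
  have e : b + w = a := by rw [hw]; abel
  simp only [one_smul, zero_smul, add_zero, e, sub_zero, div_one] at hj
  rw [mulVec_sub, dotProduct_sub]
  exact hj

theorem stmt0 {n : ℕ} (f : (Fin n → ℝ) → (Fin n → ℝ)) (hf : ContDiff ℝ 1 f)
    (M : Matrix (Fin n) (Fin n) ℝ) (hMsymm : M.IsSymm) (hMpd : M.PosDef)
    (β : ℝ) (hβ : 0 < β)
    (hcontract : ∀ z : Fin n → ℝ,
      loewnerLE ((jac f z)ᵀ * M + M * jac f z) ((-(2 * β)) • M))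
    (x y : ℝ → Fin n → ℝ)
    (hx : ∀ t : ℝ, 0 ≤ t → HasDerivAt x (f (x t)) t)
    (hy : ∀ t : ℝ, 0 ≤ t → HasDerivAt y (f (y t)) t) :
    ∀ t : ℝ, 0 ≤ t →
      mnorm M (x t - y t) ≤ Real.exp (-β * t) * mnorm M (x 0 - y 0) := by
  intro t ht
  set V : ℝ → ℝ := fun t => (x t - y t) ⬝ᵥ M.mulVec (x t - y t) with hV
  have hVd : ∀ s : ℝ, 0 ≤ s → HasDerivAt (fun s => Real.exp (2 * β * s) * V s)
      (Real.exp (2 * β * s) * (2 * β) * V s + Real.exp (2 * β * s) *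
        (2 * ((x s - y s) ⬝ᵥ M.mulVec (f (x s) - f (y s))))) s := by
    intro s hs
    have hw := (hx s hs).sub (hy s hs)
    have h1 := hasDerivAt_dotP hw (hasDerivAt_mulV M hw)
    have h2 : HasDerivAt V (2 * ((x s - y s) ⬝ᵥ M.mulVec (f (x s) - f (y s)))) s := by
      refine HasDerivAt.congr_deriv (f := V) h1 ?_
      rw [Pi.sub_apply, symm_dot hMsymm (f (x s) - f (y s))]
      ring
    have h3 : HasDerivAt (fun s => Real.exp (2 * β * s)) (Real.exp (2 * β * s) * (2 * β)) s := by
      simpa using ((hasDerivAt_id s).const_mul (2 * β)).exp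
    exact h3.mul h2
  have hanti : AntitoneOn (fun s => Real.exp (2 * β * s) * V s) (Set.Ici 0) := by
    apply antitoneOn_of_deriv_nonpos (convex_Ici 0)
    · exact fun s hs => (hVd s hs).continuousAt.continuousWithinAt
    · intro s hs
      rw [interior_Ici] at hs
      exact (hVd s (le_of_lt hs)).differentiableAt.differentiableWithinAt
    · intro s hs
      rw [interior_Ici] at hs
      rw [(hVd s (le_of_lt hs)).deriv]
      have h1 := one_sided hf hMsymm hcontract (x s) (y s)
      have h2 : 2 * β * V s + 2 * ((x s - y s) ⬝ᵥ M.mulVec (f (x s) - f (y s))) ≤ 0 := by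
        simp only [hV]; linarith
      have h3 := mul_nonpos_of_nonneg_of_nonpos (Real.exp_pos (2 * β * s)).le h2
      linarith
  have key := hanti (Set.mem_Ici.2 le_rfl) (Set.mem_Ici.2 ht) ht
  simp only [mul_zero, Real.exp_zero, one_mul] at key
  have hE : Real.exp (-β * t) = Real.sqrt (Real.exp (-β * t) ^ 2) :=
    (Real.sqrt_sq (Real.exp_pos _).le).symm
  unfold mnorm
  rw [hE, ← Real.sqrt_mul (sq_nonneg _)]
  apply Real.sqrt_le_sqrt
  change V t ≤ Real.exp (-β * t) ^ 2 * V 0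
  calc V t = Real.exp (-β * t) ^ 2 * (Real.exp (2 * β * t) * V t) := by
        rw [← mul_assoc, ← Real.exp_nat_mul, ← Real.exp_add]
        have : ((2 : ℕ) : ℝ) * (-β * t) + 2 * β * t = 0 := by push_cast; ring
        rw [this]; simp
    _ ≤ _ := mul_le_mul_of_nonneg_left key (sq_nonneg _)
end

section
/- Let f : ℝⁿ → ℝⁿ be continuously differentiable, let M be a symmetric positive definite real n×n matrix, β > 0, and let S ⊆ ℝⁿ be a convex set such that (Df(z))ᵀ M + M (Df(z)) ≼ −2βM for all z ∈ S. If x, y : [0,∞) → ℝⁿ are differentiable with x′(t) = f(x(t)) and y′(t) = f(y(t)) for all t ≥ 0, and for every t ≥ 0 the segment joining x(t) and y(t) is contained in S, then ‖x(t) − y(t)‖_M ≤ e^{−βt} ‖x(0) − y(0)‖_M for all t ≥ 0. -/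
open Matrix

lemma aux_quad {n : ℕ} (M J : Matrix (Fin n) (Fin n) ℝ) (hM : M.IsSymm) (β : ℝ)
    (h : loewnerLE (Jᵀ * M + M * J) ((-(2 * β)) • M)) (v : Fin n → ℝ) :
    v ⬝ᵥ M *ᵥ (J *ᵥ v) ≤ -β * (v ⬝ᵥ M *ᵥ v) := by
  have h1 := h.dotProduct_mulVec_nonneg v
  have e : v ⬝ᵥ (Jᵀ * M) *ᵥ v = v ⬝ᵥ M *ᵥ (J *ᵥ v) := by
    rw [← Matrix.mulVec_mulVec, Matrix.dotProduct_mulVec, Matrix.vecMul_transpose,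
      Matrix.dotProduct_mulVec v M, ← Matrix.mulVec_transpose, hM.eq, dotProduct_comm]
  simp only [star_trivial, Matrix.sub_mulVec, Matrix.add_mulVec, dotProduct_sub, dotProduct_add,
    Matrix.smul_mulVec, dotProduct_smul, smul_eq_mul, e] at h1
  rw [← Matrix.mulVec_mulVec] at h1
  linarith

lemma aux_mvt {n : ℕ} (f : (Fin n → ℝ) → (Fin n → ℝ)) (hf : ContDiff ℝ 1 f)
    (M : Matrix (Fin n) (Fin n) ℝ) (hM : M.IsSymm) (β : ℝ) (a b : Fin n → ℝ)
    (h : ∀ z ∈ segment ℝ a b, loewnerLE ((jac f z)ᵀ * M + M * jac f z) ((-(2 * β)) • M)) :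
    (a - b) ⬝ᵥ M *ᵥ (f a - f b) ≤ -β * ((a - b) ⬝ᵥ M *ᵥ (a - b)) := by
  set L : (Fin n → ℝ) →L[ℝ] ℝ := LinearMap.toContinuousLinearMap
    ((dotProductBilin ℝ ℝ (a - b)).comp M.mulVecLin) with hL
  have hLv : ∀ v, L v = (a - b) ⬝ᵥ M *ᵥ v := fun v => rfl
  have hd : ∀ s : ℝ, HasDerivAt (fun s : ℝ => L (f (b + s • (a - b))))
      (L (fderiv ℝ f (b + s • (a - b)) (a - b))) s := by
    intro s
    have h1 : HasDerivAt (fun s : ℝ => b + s • (a - b)) (a - b) s := by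
      simpa using ((hasDerivAt_id s).smul_const (a - b)).const_add b
    have h2 := ((hf.differentiable (by norm_num)) (b + s • (a - b))).hasFDerivAt
    exact L.hasFDerivAt.comp_hasDerivAt s (h2.comp_hasDerivAt s h1)
  obtain ⟨c, hc, hc'⟩ := exists_hasDerivAt_eq_slope (fun s : ℝ => L (f (b + s • (a - b)))) _
    (zero_lt_one) (fun s _ => (hd s).continuousAt.continuousWithinAt) (fun s _ => hd s)
  have hz : b + c • (a - b) ∈ segment ℝ a b := by
    rw [segment_symm, segment_eq_image']
    exact ⟨c, ⟨hc.1.le, hc.2.le⟩, rfl⟩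
  have h3 := aux_quad M _ hM β (h _ hz) (a - b)
  have h4 : jac f (b + c • (a - b)) *ᵥ (a - b) = fderiv ℝ f (b + c • (a - b)) (a - b) := by
    simp [jac, LinearMap.toMatrix'_mulVec]
  rw [h4, ← hLv, hc'] at h3
  rw [← hLv, map_sub]
  simpa using h3

theorem stmt1 {n : ℕ} (f : (Fin n → ℝ) → (Fin n → ℝ)) (hf : ContDiff ℝ 1 f)
    (M : Matrix (Fin n) (Fin n) ℝ) (hMsymm : M.IsSymm) (hMpd : M.PosDef)
    (β : ℝ) (hβ : 0 < β)
    (S : Set (Fin n → ℝ)) (hS : Convex ℝ S)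
    (hcontract : ∀ z ∈ S,
      loewnerLE ((jac f z)ᵀ * M + M * jac f z) ((-(2 * β)) • M))
    (x y : ℝ → Fin n → ℝ)
    (hx : ∀ t : ℝ, 0 ≤ t → HasDerivAt x (f (x t)) t)
    (hy : ∀ t : ℝ, 0 ≤ t → HasDerivAt y (f (y t)) t)
    (hseg : ∀ t : ℝ, 0 ≤ t → segment ℝ (x t) (y t) ⊆ S) :
    ∀ t : ℝ, 0 ≤ t →
      mnorm M (x t - y t) ≤ Real.exp (-β * t) * mnorm M (x 0 - y 0) := by
  -- derivative of the squared distance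
  have hg : ∀ t : ℝ, 0 ≤ t → HasDerivAt (fun t => (x t - y t) ⬝ᵥ M *ᵥ (x t - y t))
      (2 * ((x t - y t) ⬝ᵥ M *ᵥ (f (x t) - f (y t)))) t := by
    intro t ht
    have hd := (hx t ht).sub (hy t ht)
    have hMd : HasDerivAt (fun t => M *ᵥ (x t - y t)) (M *ᵥ (f (x t) - f (y t))) t :=
      (LinearMap.toContinuousLinearMap M.mulVecLin).hasFDerivAt.comp_hasDerivAt t hd
    have hs := HasDerivAt.fun_sum (u := Finset.univ) (fun i _ =>
      ((hasDerivAt_pi.1 hd) i).mul ((hasDerivAt_pi.1 hMd) i))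
    refine hs.congr_deriv ?_
    rw [Finset.sum_add_distrib]
    change (f (x t) - f (y t)) ⬝ᵥ M *ᵥ (x t - y t) + (x t - y t) ⬝ᵥ M *ᵥ (f (x t) - f (y t)) = _
    have : (f (x t) - f (y t)) ⬝ᵥ M *ᵥ (x t - y t)
        = (x t - y t) ⬝ᵥ M *ᵥ (f (x t) - f (y t)) := by
      rw [Matrix.dotProduct_mulVec, ← Matrix.mulVec_transpose, hMsymm.eq, dotProduct_comm]
    rw [this]; ring
  have hh : ∀ t : ℝ, 0 ≤ t → HasDerivAt
      (fun t => Real.exp (2 * β * t) * ((x t - y t) ⬝ᵥ M *ᵥ (x t - y t)))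
      (Real.exp (2 * β * t) * (2 * β) * ((x t - y t) ⬝ᵥ M *ᵥ (x t - y t)) +
        Real.exp (2 * β * t) * (2 * ((x t - y t) ⬝ᵥ M *ᵥ (f (x t) - f (y t))))) t := by
    intro t ht
    have h1 : HasDerivAt (fun t : ℝ => 2 * β * t) (2 * β) t := by
      simpa using (hasDerivAt_id t).const_mul (2 * β)
    exact h1.exp.mul (hg t ht)
  have hanti : AntitoneOn
      (fun t => Real.exp (2 * β * t) * ((x t - y t) ⬝ᵥ M *ᵥ (x t - y t))) (Set.Ici 0) := by
    refine antitoneOn_of_hasDerivWithinAt_nonpos (convex_Ici 0)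
      (fun t ht => (hh t ht).continuousAt.continuousWithinAt)
      (fun t ht => (hh t (interior_subset ht)).hasDerivWithinAt) ?_
    intro t ht
    have h0 : (0 : ℝ) ≤ t := interior_subset ht
    have h1 := aux_mvt f hf M hMsymm β (x t) (y t) (fun z hz => hcontract z (hseg t h0 hz))
    have h2 := Real.exp_pos (2 * β * t)
    nlinarith [mul_le_mul_of_nonneg_left h1 h2.le]
  intro t ht
  have h1 := hanti (Set.mem_Ici.2 le_rfl) (Set.mem_Ici.2 ht) ht
  simp only [mul_zero, Real.exp_zero, one_mul] at h1
  unfold mnorm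
  have he : Real.exp (-β * t) = Real.sqrt (Real.exp (-(2 * β * t))) := by
    rw [← Real.exp_half]; congr 1; ring
  rw [he, ← Real.sqrt_mul (Real.exp_pos _).le]
  apply Real.sqrt_le_sqrt
  rw [Real.exp_neg, inv_mul_eq_div, le_div_iff₀ (Real.exp_pos _), mul_comm]
  exact h1
end

section
/- Let S ⊆ ℝⁿ be a convex open set, f : ℝⁿ → ℝⁿ continuously differentiable, M a symmetric positive semidefinite real n×n matrix, and β > 0. Assume (Df(z))ᵀ M + M (Df(z)) ≼ −2βM for all z ∈ S. Then for all x, y ∈ S, (x − y)ᵀ M (f(x) − f(y)) ≤ −β (x − y)ᵀ M (x − y). -/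
open Matrix

theorem stmt4 {n : ℕ} (S : Set (Fin n → ℝ)) (hSconv : Convex ℝ S) (hSopen : IsOpen S)
    (f : (Fin n → ℝ) → (Fin n → ℝ)) (hf : ContDiff ℝ 1 f)
    (M : Matrix (Fin n) (Fin n) ℝ) (hMsymm : M.IsSymm) (hMpsd : M.PosSemidef)
    (β : ℝ) (hβ : 0 < β)
    (hcontract : ∀ z ∈ S,
      loewnerLE ((jac f z)ᵀ * M + M * jac f z) ((-(2 * β)) • M)) :
    ∀ x ∈ S, ∀ y ∈ S,
      (x - y) ⬝ᵥ M.mulVec (f x - f y) ≤ -β * ((x - y) ⬝ᵥ M.mulVec (x - y)) := by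
  intro x hx y hy
  set w := x - y with hw
  let L : (Fin n → ℝ) →ₗ[ℝ] ℝ :=
    { toFun := fun v => w ⬝ᵥ M.mulVec v
      map_add' := fun a b => by rw [Matrix.mulVec_add, dotProduct_add]
      map_smul' := fun c a => by
        rw [Matrix.mulVec_smul, dotProduct_smul]; rfl }
  let Lc : (Fin n → ℝ) →L[ℝ] ℝ := LinearMap.toContinuousLinearMap L
  have hL : ∀ v, Lc v = w ⬝ᵥ M.mulVec v := fun v => rfl
  have hd : ∀ z ∈ S, HasFDerivWithinAt (fun z => Lc (f z)) (Lc.comp (fderiv ℝ f z)) S z := by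
    intro z _
    have h1 : HasFDerivAt f (fderiv ℝ f z) z :=
      ((hf.differentiable (by norm_num)) z).hasFDerivAt
    exact (Lc.hasFDerivAt.comp z h1).hasFDerivWithinAt
  obtain ⟨z, hz, he⟩ := domain_mvt hd hSconv hy hx
  have hzS : z ∈ S := hSconv.segment_subset hy hx hz
  have hJ : (jac f z).mulVec w = fderiv ℝ f z w := by
    unfold jac
    rw [LinearMap.toMatrix'_mulVec]
    rfl
  have hp := (hcontract z hzS).dotProduct_mulVec_nonneg w
  have hT : w ⬝ᵥ ((jac f z)ᵀ * M).mulVec w = w ⬝ᵥ (M * jac f z).mulVec w := by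
    have : (jac f z)ᵀ * M = (M * jac f z)ᵀ := by
      rw [Matrix.transpose_mul, hMsymm.eq]
    rw [this, Matrix.mulVec_transpose, dotProduct_comm, ← Matrix.dotProduct_mulVec]
  rw [star_trivial, Matrix.sub_mulVec, Matrix.add_mulVec, dotProduct_sub, dotProduct_add, hT,
    Matrix.smul_mulVec, dotProduct_smul, ← Matrix.mulVec_mulVec, hJ, smul_eq_mul] at hp
  have he' : w ⬝ᵥ M.mulVec (f x - f y) = w ⬝ᵥ M.mulVec (fderiv ℝ f z w) := by
    rw [← hL, ← hL, map_sub]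
    exact he
  rw [he']
  linarith
end
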